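/- Let P = (X, ≺) be a poset with |X| = n elements, let ω : X → ℝ_{>0} be a positive order-reversing weight function, and fix an element z ∈ X. Then for every integer 1 < k < n: N_ω(k)² ≥ N_ω(k−1)·N_ω(k+1). -/

import Mathlib

open scoped Classical BigOperators

noncomputable section

variable {X : Type*} [Fintype X] [DecidableEq X] [PartialOrder X]

/-- A linear extension of the poset `X` with `n = |X|` elements, encoded as a bijection
`σ : X ≃ Fin n`; the value `L(x) ∈ {1, …, n}` of the usual description corresponds to
`(σ x : ℕ) + 1`. -/
def IsLinExt (σ : X ≃ Fin (Fintype.card X)) : Prop :=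
  ∀ x y : X, x < y → σ x < σ y

/-- The weighted count `N_ω(k) = Σ_{L ∈ E, L(z) = k} Π_{x : L(x) < L(z)} ω(x)` over linear
extensions placing `z` in position `k`. -/
def Nw (ω : X → ℝ) (z : X) (k : ℕ) : ℝ :=
  ∑ σ ∈ Finset.univ.filter (fun σ : X ≃ Fin (Fintype.card X) =>
      IsLinExt σ ∧ (σ z : ℕ) = k - 1),
    ∏ x ∈ Finset.univ.filter (fun x : X => σ x < σ z), ω x

/-
This is the combinatorial atlas argument of Chan and Pak. A linear extension is taken apart by
deleting its elements one at a time, from the bottom or from the top; the elements below `z` are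
those deleted from the bottom. Fixing the sides of all deletions but the first two makes the count a
symmetric bilinear form in the choices of side for these two, and the three numbers `N_ω(k + 1)`,
`N_ω(k)` and `N_ω(k - 1)` are the values of a single form at (bottom, bottom), (bottom, top) and
(top, top). The inequality is the reverse Cauchy–Schwarz inequality for this form.

The form is lifted to a matrix indexed by the possible deletions. When one more deletion is
performed in between, the matrix of a set `S` is controlled by the matrices of the sets `S \ {x}`
(the pullback inequality), so that hyperbolicity propagates from small sets to large ones as long
as the matrix is irreducible. For a two-element chain `a < b` hyperbolicity amounts to
`ω a * ω b ≤ ω a ^ 2`, that is, to `ω b ≤ ω a`. The propagation takes strictly positive coefficients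
for the choice of side, whereas the counts correspond to 0/1 coefficients; a limit bridges the gap.
-/

namespace WeightedStanley

open scoped Matrix

section Hyperbolic

variable {J m R 𝕜 : Type*}

theorem mul_mul_sub_sq_nonneg [Field 𝕜] [LinearOrder 𝕜] [IsStrictOrderedRing 𝕜]
    {M : Matrix J J 𝕜} {h : J → 𝕜} (hoff : ∀ i j, i ≠ j → 0 ≤ M i j) (hh : ∀ i, 0 < h i)
    (x : J → 𝕜) (i j : J) : 0 ≤ M i j * h i * h j * (x i / h i - x j / h j) ^ 2 := by
  obtain rfl | hij := eq_or_ne i j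
  · simp
  · have := hoff i j hij
    have := hh i
    have := hh j
    positivity

variable [Fintype J]

theorem dotProduct_mulVec_comm [CommRing R] {M : Matrix J J R} (hM : M.IsSymm) (u v : J → R) :
    u ⬝ᵥ M *ᵥ v = v ⬝ᵥ M *ᵥ u := by
  rw [← Matrix.dotProduct_transpose_mulVec, hM.eq]

theorem exists_mulVec_eq_of_forall_dotProduct_eq_zero [Fintype m] [Field 𝕜]
    {A : Matrix m J 𝕜} {w : m → 𝕜} (hw : ∀ x, x ᵥ* A = 0 → x ⬝ᵥ w = 0) :
    ∃ u, A *ᵥ u = w := by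
  by_contra hne
  obtain ⟨f, hfw, hf⟩ := Submodule.exists_le_ker_of_notMem
    (show w ∉ LinearMap.range A.mulVecLin by simpa using hne)
  obtain ⟨x, rfl⟩ := (dotProductEquiv 𝕜 m).surjective f
  refine hfw (hw x (dotProduct_eq_zero _ fun u => ?_))
  rw [← Matrix.dotProduct_mulVec]
  exact hf ⟨u, rfl⟩

theorem sq_dotProduct_mulVec_le_of_nonneg [CommRing R] [LinearOrder R] [IsStrictOrderedRing R]
    {N : Matrix J J R} (hN : N.IsSymm) (hpos : ∀ x, 0 ≤ x ⬝ᵥ N *ᵥ x) (u v : J → R) :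
    (u ⬝ᵥ N *ᵥ v) ^ 2 ≤ (u ⬝ᵥ N *ᵥ u) * (v ⬝ᵥ N *ᵥ v) := by
  simpa only [Matrix.toBilin'_apply'] using
    LinearMap.BilinForm.apply_sq_le_of_symm (Matrix.toBilin' N)
      (fun x => by simpa only [Matrix.toBilin'_apply'] using hpos x)
      (LinearMap.BilinForm.isSymm_iff.1 (Matrix.isSymm_toBilin'_iff_isSymm.2 hN)) u v

/-- The generalised Laplacian of a weighted adjacency matrix `M`, conjugated so that it annihilates
the vector `h` instead of the constants. -/
def laplacian [Field 𝕜] (M : Matrix J J 𝕜) (h : J → 𝕜) : Matrix J J 𝕜 :=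
  Matrix.diagonal ((M *ᵥ h) / h) - M

theorem laplacian_mulVec [Field 𝕜] (M : Matrix J J 𝕜) (h x : J → 𝕜) :
    laplacian M h *ᵥ x = (M *ᵥ h) / h * x - M *ᵥ x := by
  rw [laplacian, Matrix.sub_mulVec]
  congr 1
  exact funext fun i => Matrix.mulVec_diagonal _ _ _

theorem isSymm_laplacian [Field 𝕜] {M : Matrix J J 𝕜} (hM : M.IsSymm) (h : J → 𝕜) :
    (laplacian M h).IsSymm :=
  (Matrix.isSymm_diagonal _).sub hM

theorem two_mul_dotProduct_laplacian_mulVec [Field 𝕜] {M : Matrix J J 𝕜} (hM : M.IsSymm)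
    {h : J → 𝕜} (hh : ∀ i, h i ≠ 0) (x : J → 𝕜) :
    2 * (x ⬝ᵥ laplacian M h *ᵥ x) =
      ∑ i, ∑ j, M i j * h i * h j * (x i / h i - x j / h j) ^ 2 := by
  have hexpand : x ⬝ᵥ laplacian M h *ᵥ x =
      ∑ i, ∑ j, M i j * (x i ^ 2 * h j / h i - x i * x j) := by
    rw [laplacian_mulVec]
    simp only [dotProduct, Matrix.mulVec, Pi.sub_apply, Pi.mul_apply, Pi.div_apply,
      Finset.sum_div, Finset.sum_mul, ← Finset.sum_sub_distrib, Finset.mul_sum]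
    exact Finset.sum_congr rfl fun i _ => Finset.sum_congr rfl fun j _ => by ring
  have hswap : ∑ i, ∑ j, M i j * (x i ^ 2 * h j / h i - x i * x j) =
      ∑ i, ∑ j, M i j * (x j ^ 2 * h i / h j - x j * x i) := by
    rw [Finset.sum_comm]
    simp only [hM.apply]
  rw [two_mul, hexpand]
  nth_rw 2 [hswap]
  simp only [← Finset.sum_add_distrib]
  refine Finset.sum_congr rfl fun i _ => Finset.sum_congr rfl fun j _ => ?_
  have hi := hh i
  have hj := hh j
  field_simp
  ring

/-- A symmetric form is hyperbolic when it satisfies the reverse Cauchy–Schwarz inequality against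
every vector of nonnegative square; equivalently, it has at most one positive eigenvalue. -/
def IsHyperbolic [CommRing R] [LE R] (M : Matrix J J R) : Prop :=
  ∀ u v : J → R, 0 ≤ v ⬝ᵥ M *ᵥ v →
    (u ⬝ᵥ M *ᵥ u) * (v ⬝ᵥ M *ᵥ v) ≤ (u ⬝ᵥ M *ᵥ v) ^ 2

theorem isHyperbolic_of_binary_form [CommRing R] [LinearOrder R] [IsStrictOrderedRing R]
    {M : Matrix J J R} (f g : (J → R) → R) {p q r : R} (hdet : p * r ≤ q ^ 2)
    (hM : ∀ u v, u ⬝ᵥ M *ᵥ v = p * (f u * f v) + q * (f u * g v + g u * f v) + r * (g u * g v)) :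
    IsHyperbolic M := by
  intro u v _
  rw [hM, hM, hM]
  nlinarith [mul_nonneg (sub_nonneg.2 hdet) (sq_nonneg (f u * g v - f v * g u))]

theorem isHyperbolic_of_forall_ne_eq_zero [CommRing R] [LinearOrder R] [IsStrictOrderedRing R]
    {M : Matrix J J R} (hM : M.IsSymm) {i j : J} (hij : i ≠ j)
    (hsupp : ∀ k l, k ≠ i → k ≠ j → M k l = 0) (hdet : M i i * M j j ≤ M i j ^ 2) :
    IsHyperbolic M := by
  have hrow (v : J → R) (k : J) : (M *ᵥ v) k = M k i * v i + M k j * v j :=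
    Fintype.sum_eq_add i j hij fun l hl =>
      mul_eq_zero_of_left ((hM.apply l k).trans (hsupp l k hl.1 hl.2)) (v l)
  refine isHyperbolic_of_binary_form (fun v => v i) (fun v => v j) hdet fun u v => ?_
  rw [dotProduct, Fintype.sum_eq_add i j hij fun k hk => by
    rw [hrow, hsupp k i hk.1 hk.2, hsupp k j hk.1 hk.2]; ring]
  rw [hrow, hrow, hM.apply i j]
  ring

variable [Field 𝕜] [LinearOrder 𝕜] [IsStrictOrderedRing 𝕜]

theorem isHyperbolic_of_nonpos_of_orthogonal {M : Matrix J J 𝕜} (hM : M.IsSymm) (h : J → 𝕜)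
    (hneg : ∀ v, v ⬝ᵥ M *ᵥ h = 0 → v ⬝ᵥ M *ᵥ v ≤ 0) : IsHyperbolic M := by
  intro u v hv
  obtain hv | hv := hv.eq_or_lt
  · rw [← hv, mul_zero]
    positivity
  have hvh : v ⬝ᵥ M *ᵥ h ≠ 0 := fun h0 => (hneg v h0).not_gt hv
  set t := (u ⬝ᵥ M *ᵥ h) / (v ⬝ᵥ M *ᵥ h) with ht
  have hproj : (u - t • v) ⬝ᵥ M *ᵥ h = 0 := by
    rw [sub_dotProduct, smul_dotProduct, smul_eq_mul, ht, div_mul_cancel₀ _ hvh, sub_self]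
  have hle := hneg _ hproj
  simp only [Matrix.mulVec_sub, Matrix.mulVec_smul, dotProduct_sub, sub_dotProduct,
    dotProduct_smul, smul_dotProduct, smul_eq_mul, dotProduct_mulVec_comm hM v u] at hle
  nlinarith [mul_nonneg (sub_nonneg.2 hle) hv.le, sq_nonneg (t * (v ⬝ᵥ M *ᵥ v) - u ⬝ᵥ M *ᵥ v)]

section Nonneg

variable {M : Matrix J J 𝕜} {h : J → 𝕜}

theorem dotProduct_laplacian_mulVec_nonneg (hM : M.IsSymm) (hoff : ∀ i j, i ≠ j → 0 ≤ M i j)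
    (hh : ∀ i, 0 < h i) (x : J → 𝕜) : 0 ≤ x ⬝ᵥ laplacian M h *ᵥ x := by
  have hnonneg : 0 ≤ 2 * (x ⬝ᵥ laplacian M h *ᵥ x) := by
    rw [two_mul_dotProduct_laplacian_mulVec hM fun i => (hh i).ne']
    exact Finset.sum_nonneg fun i _ => Finset.sum_nonneg fun j _ =>
      mul_mul_sub_sq_nonneg hoff hh x i j
  linarith

theorem div_eq_div_of_laplacian_mulVec_eq_zero (hM : M.IsSymm)
    (hoff : ∀ i j, i ≠ j → 0 ≤ M i j) (hh : ∀ i, 0 < h i) {x : J → 𝕜}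
    (hx : laplacian M h *ᵥ x = 0) {i j : J} (hij : M i j ≠ 0) : x i / h i = x j / h j := by
  have hsum := two_mul_dotProduct_laplacian_mulVec hM (fun i => (hh i).ne') x
  rw [hx, dotProduct_zero, mul_zero, eq_comm, Finset.sum_eq_zero_iff_of_nonneg fun i _ =>
    Finset.sum_nonneg fun j _ => mul_mul_sub_sq_nonneg hoff hh x i j] at hsum
  have hterm := (Finset.sum_eq_zero_iff_of_nonneg fun j _ =>
    mul_mul_sub_sq_nonneg hoff hh x i j).1 (hsum i (Finset.mem_univ i)) j (Finset.mem_univ j)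
  have hi := (hh i).ne'
  have hj := (hh j).ne'
  simpa [hij, hi, hj, sub_eq_zero] using hterm

theorem dotProduct_eq_zero_of_laplacian_mulVec_eq_zero (hM : M.IsSymm)
    (hoff : ∀ i j, i ≠ j → 0 ≤ M i j) (hh : ∀ i, 0 < h i)
    (hconn : ∀ p : J → 𝕜, (∀ i j, M i j ≠ 0 → p i = p j) →
      ∀ i j, (M *ᵥ h) i ≠ 0 → (M *ᵥ h) j ≠ 0 → p i = p j)
    {x v : J → 𝕜} (hx : laplacian M h *ᵥ x = 0) (hv : v ⬝ᵥ M *ᵥ h = 0) :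
    x ⬝ᵥ ((M *ᵥ h) / h * v) = 0 := by
  have hconst := hconn (x / h) fun i j hij =>
    div_eq_div_of_laplacian_mulVec_eq_zero hM hoff hh hx hij
  by_cases hzero : ∃ i, (M *ᵥ h) i ≠ 0
  · obtain ⟨i, hi⟩ := hzero
    calc x ⬝ᵥ ((M *ᵥ h) / h * v) = (x i / h i) * (v ⬝ᵥ M *ᵥ h) := by
          rw [dotProduct, dotProduct, Finset.mul_sum]
          refine Finset.sum_congr rfl fun j _ => ?_
          obtain hj | hj := eq_or_ne ((M *ᵥ h) j) 0
          · simp [hj]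
          · have hxj : x i / h i = x j / h j := hconst i j hi hj
            rw [hxj]
            simp only [Pi.mul_apply, Pi.div_apply]
            ring
      _ = 0 := by rw [hv, mul_zero]
  · push Not at hzero
    simp [funext hzero, dotProduct]

theorem dotProduct_mul_le_of_pullback (hh : ∀ i, 0 < h i) {u v : J → 𝕜}
    (hMu : M *ᵥ u = (M *ᵥ h) / h * (u - v))
    (hpull : u ⬝ᵥ M *ᵥ u ≤ ∑ i, h i * (M *ᵥ u) i ^ 2 / (M *ᵥ h) i) :
    u ⬝ᵥ ((M *ᵥ h) / h * v) ≤ v ⬝ᵥ ((M *ᵥ h) / h * v) := by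
  have hterm (i : J) : h i * (M *ᵥ u) i ^ 2 / (M *ᵥ h) i =
      (M *ᵥ h) i / h i * (u i - v i) ^ 2 := by
    have hi := (hh i).ne'
    rw [hMu]
    simp only [Pi.mul_apply, Pi.div_apply, Pi.sub_apply]
    obtain hd | hd := eq_or_ne ((M *ᵥ h) i) 0
    · simp [hd]
    · field_simp
  simp only [hterm] at hpull
  rw [hMu] at hpull
  rw [← sub_nonneg] at hpull ⊢
  convert hpull using 1
  simp only [dotProduct, ← Finset.sum_sub_distrib, Pi.mul_apply, Pi.div_apply, Pi.sub_apply]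
  exact Finset.sum_congr rfl fun i _ => by ring

/- The pullback bound says that `M ≤ M D⁻¹ M` with `D = diag (M h / h)`. If `v` is `M h`-orthogonal
then `D v` is in the range of the positive semidefinite matrix `D - M`, and the bound becomes a
Cauchy–Schwarz estimate. -/
theorem isHyperbolic_of_pullback (hM : M.IsSymm)
    (hoff : ∀ i j, i ≠ j → 0 ≤ M i j) (hh : ∀ i, 0 < h i)
    (hconn : ∀ p : J → 𝕜, (∀ i j, M i j ≠ 0 → p i = p j) →
      ∀ i j, (M *ᵥ h) i ≠ 0 → (M *ᵥ h) j ≠ 0 → p i = p j)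
    (hpull : ∀ v, v ⬝ᵥ M *ᵥ v ≤ ∑ i, h i * (M *ᵥ v) i ^ 2 / (M *ᵥ h) i) :
    IsHyperbolic M := by
  refine isHyperbolic_of_nonpos_of_orthogonal hM h fun v hv => ?_
  have hL := isSymm_laplacian hM h
  obtain ⟨u, hu⟩ : ∃ u, laplacian M h *ᵥ u = (M *ᵥ h) / h * v :=
    exists_mulVec_eq_of_forall_dotProduct_eq_zero fun x hx =>
      dotProduct_eq_zero_of_laplacian_mulVec_eq_zero hM hoff hh hconn
        (by rwa [← Matrix.vecMul_transpose, hL.eq]) hv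
  have hMu : M *ᵥ u = (M *ᵥ h) / h * (u - v) := by
    rw [mul_sub, ← hu, laplacian_mulVec, sub_sub_cancel]
  set q := v ⬝ᵥ ((M *ᵥ h) / h * v) with hq
  have hLu : u ⬝ᵥ laplacian M h *ᵥ u ≤ q := by
    rw [hu]
    exact dotProduct_mul_le_of_pullback hh hMu (hpull u)
  have hcs : q ^ 2 ≤ (u ⬝ᵥ laplacian M h *ᵥ u) * (v ⬝ᵥ laplacian M h *ᵥ v) := by
    rw [mul_comm, hq, ← hu]
    exact sq_dotProduct_mulVec_le_of_nonneg hL (dotProduct_laplacian_mulVec_nonneg hM hoff hh) v u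
  have hLv : v ⬝ᵥ laplacian M h *ᵥ v = q - v ⬝ᵥ M *ᵥ v := by
    rw [laplacian_mulVec, dotProduct_sub]
  have hLv0 := dotProduct_laplacian_mulVec_nonneg hM hoff hh v
  by_contra! hpos
  have hqpos : 0 < q := by linarith
  nlinarith [mul_le_mul_of_nonneg_right hLu hLv0, mul_pos hqpos hpos]

end Nonneg

end Hyperbolic

section Removal

/-- The strict order read from one end of the poset: upwards from the bottom for `true`, downwards
from the top for `false`. -/
def SideLT {α : Type*} [LT α] : Bool → α → α → Prop
  | true, x, y => x < y
  | false, x, y => y < x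

/-- A removal deletes an element from one end of a linear extension: `(x, true)` deletes `x` from
the bottom and `(x, false)` deletes it from the top. -/
abbrev Removal (α : Type*) := α × Bool

/-- After the removal of `i`, the element of `j` may become extremal on the side of `i`; until then
`i` blocks `j`. -/
def Blocks {α : Type*} [LT α] (i j : Removal α) : Prop :=
  i.2 = j.2 ∧ SideLT i.2 i.1 j.1

variable {α : Type*} [Preorder α]

theorem not_sideLT_self (b : Bool) (x : α) : ¬ SideLT b x x := by
  cases b <;> exact lt_irrefl x

theorem sideLT_not_iff (b : Bool) (x y : α) : SideLT (!b) x y ↔ SideLT b y x := by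
  cases b <;> exact Iff.rfl

theorem exists_mem_forall_not_sideLT (b : Bool) {S : Finset α} (hS : S.Nonempty) :
    ∃ x ∈ S, ∀ y ∈ S, ¬ SideLT b y x := by
  cases b
  · obtain ⟨x, hx⟩ := S.exists_maximal hS
    exact ⟨x, hx.prop, fun y hy => hx.not_gt hy⟩
  · obtain ⟨x, hx⟩ := S.exists_minimal hS
    exact ⟨x, hx.prop, fun y hy => hx.not_lt hy⟩

variable [DecidableEq α] {z : α} {S : Finset α} {i j k : Removal α}

/-- The removals of elements of `S` that are possible in a linear extension of `insert z S`: the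
element must be extremal on its side, also with respect to the distinguished element `z`. -/
def removals (z : α) (S : Finset α) : Finset (Removal α) :=
  {i ∈ S ×ˢ Finset.univ | ∀ y ∈ insert z S, ¬ SideLT i.2 y i.1}

theorem mem_removals :
    i ∈ removals z S ↔ i.1 ∈ S ∧ ¬ SideLT i.2 z i.1 ∧ ∀ y ∈ S, ¬ SideLT i.2 y i.1 := by
  simp [removals]

theorem fst_mem_of_mem_removals (hi : i ∈ removals z S) : i.1 ∈ S :=
  (mem_removals.1 hi).1

theorem card_erase_fst_add_one (hi : i ∈ removals z S) : (S.erase i.1).card + 1 = S.card :=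
  Finset.card_erase_add_one (fst_mem_of_mem_removals hi)

theorem not_blocks_of_mem_removals (hi : i.1 ∈ S) (hj : j ∈ removals z S) : ¬ Blocks i j :=
  fun h => (mem_removals.1 hj).2.2 i.1 hi (h.1 ▸ h.2)

theorem removals_pair_of_not_lt {a b : α} (hab : ¬ a < b) (hba : ¬ b < a) :
    removals z {a, b} = removals z {a} ∪ removals z {b} := by
  ext ⟨x, s⟩
  cases s <;> simp only [mem_removals, SideLT, Finset.mem_union, Finset.mem_insert,
    Finset.mem_singleton] <;> grind [lt_irrefl]

theorem removals_nonempty (z : α) (hS : S.Nonempty) : (removals z S).Nonempty := by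
  by_cases h : ∃ x ∈ S, ¬ z < x
  · obtain ⟨x₀, hx₀, hzx₀⟩ := h
    obtain ⟨x, hx, hmin⟩ := exists_mem_forall_not_sideLT true (S := {x ∈ S | ¬ z < x})
      ⟨x₀, Finset.mem_filter.2 ⟨hx₀, hzx₀⟩⟩
    obtain ⟨hxS, hzx⟩ := Finset.mem_filter.1 hx
    exact ⟨(x, true), mem_removals.2 ⟨hxS, hzx, fun y hy hyx =>
      hmin y (Finset.mem_filter.2 ⟨hy, fun hzy => hzx (hzy.trans hyx)⟩) hyx⟩⟩
  · push Not at h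
    obtain ⟨x, hx, hmax⟩ := exists_mem_forall_not_sideLT false hS
    exact ⟨(x, false), mem_removals.2 ⟨hx, (h x hx).not_gt, hmax⟩⟩

theorem mem_removals_erase_of_ne (hj : j ∈ removals z S) (hij : j.1 ≠ i.1) :
    j ∈ removals z (S.erase i.1) := by
  obtain ⟨hjS, hzj, hmin⟩ := mem_removals.1 hj
  exact mem_removals.2 ⟨Finset.mem_erase.2 ⟨hij, hjS⟩, hzj,
    fun y hy => hmin y (Finset.mem_of_mem_erase hy)⟩

theorem mem_removals_of_mem_removals_erase (hi : i ∈ removals z S)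
    (hj : j ∈ removals z (S.erase i.1)) (hij : ¬ Blocks i j) : j ∈ removals z S := by
  obtain ⟨hjS, hzj, hmin⟩ := mem_removals.1 hj
  have hjS := Finset.mem_of_mem_erase hjS
  refine mem_removals.2 ⟨hjS, hzj, fun y hy hyj => ?_⟩
  obtain rfl | hyi := eq_or_ne y i.1
  · obtain hb | hb := eq_or_ne i.2 j.2
    · exact hij ⟨hb, hb ▸ hyj⟩
    · rw [← Bool.not_eq.2 hb, sideLT_not_iff] at hyj
      exact (mem_removals.1 hi).2.2 _ hjS hyj
  · exact hmin y (Finset.mem_erase.2 ⟨hyi, hy⟩) hyj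

theorem filter_not_blocks_removals_erase (hi : i ∈ removals z S) :
    {j ∈ removals z (S.erase i.1) | ¬ Blocks i j} = {j ∈ removals z S | j.1 ≠ i.1} := by
  ext j
  simp only [Finset.mem_filter]
  constructor
  · rintro ⟨hj, hij⟩
    exact ⟨mem_removals_of_mem_removals_erase hi hj hij,
      Finset.ne_of_mem_erase (fst_mem_of_mem_removals hj)⟩
  · rintro ⟨hj, hij⟩
    exact ⟨mem_removals_erase_of_ne hj hij,
      not_blocks_of_mem_removals (fst_mem_of_mem_removals hi) hj⟩

theorem eq_of_forall_mem_removals_ne {β : Type*} (hS : 2 ≤ S.card) {p : Removal α → β}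
    (hp : ∀ i ∈ removals z S, ∀ j ∈ removals z S, i.1 ≠ j.1 → p i = p j)
    (hi : i ∈ removals z S) (hj : j ∈ removals z S) : p i = p j := by
  obtain hij | hij := ne_or_eq i.1 j.1
  · exact hp i hi j hj hij
  obtain hb | hb := eq_or_ne i.2 j.2
  · rw [Prod.ext hij hb]
  obtain ⟨k, hk⟩ := removals_nonempty z (S := S.erase i.1) (Finset.card_pos.1 (by
    have := card_erase_fst_add_one hi
    omega))
  have hki : k.1 ≠ i.1 := Finset.ne_of_mem_erase (fst_mem_of_mem_removals hk)
  have hkS : k ∈ removals z S := by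
    refine mem_removals_of_mem_removals_erase hi hk fun hik => ?_
    have hkj : SideLT j.2 k.1 j.1 := by
      rw [← Bool.not_eq.2 hb, sideLT_not_iff, ← hij]
      exact hik.2
    exact (mem_removals.1 hj).2.2 k.1 (Finset.mem_of_mem_erase (fst_mem_of_mem_removals hk)) hkj
  exact (hp i hi k hkS hki.symm).trans (hp k hkS j hj (hij ▸ hki))

end Removal

section Atlas

variable {α R : Type*} [Preorder α] [DecidableEq α]

theorem sum_sum_removals_erase [AddCommMonoid R] (z : α) (S : Finset α)
    (f : Removal α → Removal α → R) :
    ∑ i ∈ removals z S, ∑ j ∈ removals z (S.erase i.1), f i j =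
      ∑ i ∈ removals z S, ∑ j ∈ removals z (S.erase i.1) with Blocks i j, f i j +
        ∑ i ∈ removals z S, ∑ j ∈ removals z S with j.1 ≠ i.1, f i j := by
  rw [← Finset.sum_add_distrib]
  refine Finset.sum_congr rfl fun i hi => ?_
  rw [← Finset.sum_filter_add_sum_filter_not _ (Blocks i), filter_not_blocks_removals_erase hi]

theorem sum_sum_removals_ne_le [AddCommGroup R] [LinearOrder R] [IsOrderedAddMonoid R] {z : α}
    {S : Finset α} {f g : Removal α → Removal α → R}
    (h : ∀ i ∈ removals z S, ∀ j ∈ removals z S, f i j + f j i ≤ g i j + g j i) :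
    ∑ i ∈ removals z S, ∑ j ∈ removals z S with j.1 ≠ i.1, f i j ≤
      ∑ i ∈ removals z S, ∑ j ∈ removals z S with j.1 ≠ i.1, g i j := by
  have hswap (f : Removal α → Removal α → R) :
      2 • ∑ i ∈ removals z S, ∑ j ∈ removals z S with j.1 ≠ i.1, f i j =
        ∑ i ∈ removals z S, ∑ j ∈ removals z S with j.1 ≠ i.1, (f i j + f j i) := by
    simp only [Finset.sum_add_distrib, two_nsmul]
    congr 1
    refine Finset.sum_comm' fun i j => ?_
    simp only [Finset.mem_filter]
    tauto
  rw [← nsmul_le_nsmul_iff_right two_ne_zero, hswap, hswap]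
  exact Finset.sum_le_sum fun i hi => Finset.sum_le_sum fun j hj =>
    h i hi j (Finset.mem_filter.1 hj).1

/-- The map `v ↦ v⟨i⟩` that pulls a vector on removals back along the removal of `i`: the removals
which `i` blocked inherit the coordinate of `i`. -/
def transfer {α R : Type*} [LT α] (i : Removal α) (v : Removal α → R) (j : Removal α) : R :=
  if Blocks i j then v i else v j

theorem transfer_comp_snd {α R : Type*} [LT α] (i : Removal α) (c : Bool → R) :
    transfer i (c ∘ Prod.snd) = c ∘ Prod.snd := by
  ext j
  unfold transfer
  split_ifs with h
  · exact congrArg c h.1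
  · rfl

/-- Only the elements removed from the bottom contribute to the weight of a linear extension, since
they are the ones placed below the distinguished element. -/
def removalWeight {α R : Type*} [One R] (ω : α → R) (i : Removal α) : R :=
  if i.2 then ω i.1 else 1

theorem removalWeight_nonneg {α R : Type*} [Semiring R] [PartialOrder R] [IsOrderedRing R]
    {ω : α → R} (hω : ∀ x, 0 ≤ ω x) (i : Removal α) : 0 ≤ removalWeight ω i := by
  unfold removalWeight
  split_ifs
  exacts [hω _, zero_le_one]

theorem removalWeight_pos {α R : Type*} [Semiring R] [PartialOrder R] [IsStrictOrderedRing R]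
    {ω : α → R} (hω : ∀ x, 0 < ω x) (i : Removal α) : 0 < removalWeight ω i := by
  unfold removalWeight
  split_ifs
  exacts [hω _, one_pos]

/-- One step of the recursion on linear extensions: sum `g` over all ways of removing one element
from `S`, charging `c b` for a removal on side `b`. -/
def peel [CommSemiring R] (ω : α → R) (z : α) (c : Bool → R) (g : Finset α → R)
    (S : Finset α) : R :=
  ∑ i ∈ removals z S, removalWeight ω i * c i.2 * g (S.erase i.1)

/-- The matrix attached to the state `S` in the combinatorial atlas. Off the diagonal, its `(i, j)`
entry weighs the two successive removals `i` and `j` by the value of `g` on what remains of `S`; the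
diagonal entry at `i` collects the second removals that `i` used to block. -/
def atlasMatrix [CommSemiring R] (ω : α → R) (z : α) (g : Finset α → R) (S : Finset α) :
    Matrix (Removal α) (Removal α) R :=
  Matrix.diagonal (fun i => if i ∈ removals z S then
      removalWeight ω i * ∑ k ∈ removals z (S.erase i.1) with Blocks i k,
        removalWeight ω k * g ((S.erase i.1).erase k.1)
    else 0) +
  Matrix.of fun i j => if i ∈ removals z S ∧ j ∈ removals z S ∧ i.1 ≠ j.1 then
      removalWeight ω i * removalWeight ω j * g ((S.erase i.1).erase j.1)
    else 0

section CommRing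

variable [CommRing R] (ω : α → R) (z : α) (g : Finset α → R) (S : Finset α)

theorem isSymm_atlasMatrix : (atlasMatrix ω z g S).IsSymm := by
  refine (Matrix.isSymm_diagonal _).add (Matrix.IsSymm.ext fun i j => ?_)
  simp only [Matrix.of_apply, Finset.erase_right_comm (a := j.1), ne_comm (a := j.1),
    mul_comm (removalWeight ω j), and_left_comm (a := j ∈ removals z S)]

variable {z S} in
theorem atlasMatrix_apply_of_notMem {i : Removal α} (hi : i ∉ removals z S) (j : Removal α) :
    atlasMatrix ω z g S i j = 0 := by
  simp [atlasMatrix, Matrix.diagonal_apply, hi]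

variable {z S} in
theorem atlasMatrix_apply_of_ne {i j : Removal α} (hi : i ∈ removals z S) (hj : j ∈ removals z S)
    (hij : i.1 ≠ j.1) : atlasMatrix ω z g S i j =
      removalWeight ω i * removalWeight ω j * g ((S.erase i.1).erase j.1) := by
  have hne : i ≠ j := fun h => hij (congrArg Prod.fst h)
  simp [atlasMatrix, hne, hi, hj, hij]

/-- The effect on `v` of the two successive removals `i` and `j`, summed against `g` over the third
removal. -/
def transferSum (v : Removal α → R) (i j : Removal α) : R :=
  ∑ k ∈ removals z ((S.erase i.1).erase j.1),
    removalWeight ω k * transfer j (transfer i v) k * g (((S.erase i.1).erase j.1).erase k.1)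

variable {z S} in
theorem transferSum_sub_transferSum_swap {i j : Removal α} (hi : i ∈ removals z S)
    (hj : j ∈ removals z S) (v : Removal α → R) :
    transferSum ω z g S v i j - transferSum ω z g S v j i =
      ∑ k ∈ removals z ((S.erase i.1).erase j.1) with Blocks i k ∧ Blocks j k,
        removalWeight ω k * (v j - v i) * g (((S.erase i.1).erase j.1).erase k.1) := by
  have hij := not_blocks_of_mem_removals (fst_mem_of_mem_removals hi) hj
  have hji := not_blocks_of_mem_removals (fst_mem_of_mem_removals hj) hi
  rw [transferSum, transferSum, Finset.erase_right_comm (a := j.1), ← Finset.sum_sub_distrib,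
    Finset.sum_filter]
  refine Finset.sum_congr rfl fun k _ => ?_
  simp only [transfer, if_neg hij, if_neg hji]
  split_ifs <;> grind

variable [Fintype α]

variable {z S} in
theorem atlasMatrix_mulVec_of_notMem {i : Removal α} (hi : i ∉ removals z S)
    (v : Removal α → R) : (atlasMatrix ω z g S *ᵥ v) i = 0 := by
  simp only [Matrix.mulVec, dotProduct, atlasMatrix_apply_of_notMem ω g hi, zero_mul,
    Finset.sum_const_zero]

variable {z S} in
theorem atlasMatrix_mulVec_of_mem {i : Removal α} (hi : i ∈ removals z S) (v : Removal α → R) :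
    (atlasMatrix ω z g S *ᵥ v) i = removalWeight ω i * ∑ j ∈ removals z (S.erase i.1),
      removalWeight ω j * transfer i v j * g ((S.erase i.1).erase j.1) := by
  rw [← Finset.sum_filter_add_sum_filter_not _ (Blocks i), mul_add,
    filter_not_blocks_removals_erase hi, atlasMatrix, Matrix.add_mulVec, Pi.add_apply,
    Matrix.mulVec_diagonal, if_pos hi, mul_assoc, Finset.sum_mul]
  congr 2
  · refine Finset.sum_congr rfl fun j hj => ?_
    rw [transfer, if_pos (Finset.mem_filter.1 hj).2]
    ring
  · rw [Finset.mul_sum, Matrix.mulVec, dotProduct, eq_comm]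
    refine Finset.sum_subset_zero_on_sdiff (Finset.subset_univ _) (fun j hj => ?_) fun j hj => ?_
    · have hij : ¬ (j ∈ removals z S ∧ i.1 ≠ j.1) := fun h =>
        (Finset.mem_sdiff.1 hj).2 (Finset.mem_filter.2 ⟨h.1, h.2.symm⟩)
      simp [hij]
    · obtain ⟨hj, hij⟩ := Finset.mem_filter.1 hj
      rw [Matrix.of_apply, if_pos ⟨hi, hj, hij.symm⟩, transfer,
        if_neg (not_blocks_of_mem_removals (fst_mem_of_mem_removals hi) hj)]
      ring

theorem dotProduct_atlasMatrix_mulVec (u v : Removal α → R) :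
    u ⬝ᵥ atlasMatrix ω z g S *ᵥ v = ∑ i ∈ removals z S, u i * (removalWeight ω i *
      ∑ j ∈ removals z (S.erase i.1),
        removalWeight ω j * transfer i v j * g ((S.erase i.1).erase j.1)) := by
  rw [dotProduct, eq_comm]
  refine Finset.sum_subset_zero_on_sdiff (Finset.subset_univ _) (fun i hi => ?_) fun i hi => ?_
  · rw [atlasMatrix_mulVec_of_notMem ω g (Finset.mem_sdiff.1 hi).2, mul_zero]
  · rw [atlasMatrix_mulVec_of_mem ω g hi]

variable {z S} in
theorem atlasMatrix_mulVec_comp_snd {i : Removal α} (hi : i ∈ removals z S) (c : Bool → R) :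
    (atlasMatrix ω z g S *ᵥ (c ∘ Prod.snd)) i = removalWeight ω i * peel ω z c g (S.erase i.1) := by
  rw [atlasMatrix_mulVec_of_mem ω g hi, transfer_comp_snd]
  rfl

theorem dotProduct_atlasMatrix_mulVec_comp_snd (c d : Bool → R) :
    (c ∘ Prod.snd) ⬝ᵥ atlasMatrix ω z g S *ᵥ (d ∘ Prod.snd) = peel ω z c (peel ω z d g) S := by
  rw [dotProduct_atlasMatrix_mulVec]
  refine Finset.sum_congr rfl fun i _ => ?_
  rw [transfer_comp_snd, ← mul_assoc, mul_comm ((c ∘ Prod.snd) i)]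
  rfl

variable {z S} in
theorem atlasMatrix_peel_mulVec {i : Removal α} (hi : i ∈ removals z S) (c : Bool → R)
    (v : Removal α → R) :
    (atlasMatrix ω z (peel ω z c g) S *ᵥ v) i = removalWeight ω i *
      (transfer i v ⬝ᵥ atlasMatrix ω z g (S.erase i.1) *ᵥ (c ∘ Prod.snd)) := by
  rw [atlasMatrix_mulVec_of_mem ω _ hi, dotProduct_atlasMatrix_mulVec]
  refine congrArg _ (Finset.sum_congr rfl fun j _ => ?_)
  rw [transfer_comp_snd, mul_comm (removalWeight ω j), mul_assoc]
  rfl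

theorem dotProduct_atlasMatrix_peel_mulVec (c : Bool → R) (v : Removal α → R) :
    v ⬝ᵥ atlasMatrix ω z (peel ω z c g) S *ᵥ v =
      ∑ i ∈ removals z S, ∑ j ∈ removals z (S.erase i.1),
        removalWeight ω i * removalWeight ω j * (c j.2 * v i) * transferSum ω z g S v i j := by
  rw [dotProduct_atlasMatrix_mulVec]
  refine Finset.sum_congr rfl fun i hi => ?_
  rw [← atlasMatrix_mulVec_of_mem ω _ hi, atlasMatrix_peel_mulVec ω g hi,
    dotProduct_mulVec_comm (isSymm_atlasMatrix ω z g _), dotProduct_atlasMatrix_mulVec,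
    Finset.mul_sum, Finset.mul_sum]
  refine Finset.sum_congr rfl fun j _ => ?_
  simp only [transferSum, Function.comp_apply]
  ring

theorem sum_dotProduct_atlasMatrix_transfer (c : Bool → R) (v : Removal α → R) :
    ∑ i ∈ removals z S, c i.2 * (removalWeight ω i *
        (transfer i v ⬝ᵥ atlasMatrix ω z g (S.erase i.1) *ᵥ transfer i v)) =
      ∑ i ∈ removals z S, ∑ j ∈ removals z (S.erase i.1),
        removalWeight ω i * removalWeight ω j * (c i.2 * transfer i v j) *
          transferSum ω z g S v i j := by
  refine Finset.sum_congr rfl fun i _ => ?_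
  rw [dotProduct_atlasMatrix_mulVec, Finset.mul_sum, Finset.mul_sum]
  refine Finset.sum_congr rfl fun j _ => ?_
  simp only [transferSum]
  ring

variable {z S} in
theorem atlasMatrix_one_mulVec_of_not_sideLT {i : Removal α} (hi : i ∈ removals z S) {y : α}
    (hS : S.erase i.1 = {y}) (hy : ¬ SideLT i.2 i.1 y) (v : Removal α → R) :
    (atlasMatrix ω z 1 S *ᵥ v) i =
      removalWeight ω i * ∑ j ∈ removals z {y}, removalWeight ω j * v j := by
  rw [atlasMatrix_mulVec_of_mem ω 1 hi, hS]
  refine congrArg _ (Finset.sum_congr rfl fun j hj => ?_)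
  have hij : ¬ Blocks i j := fun h =>
    hy (Finset.mem_singleton.1 (fst_mem_of_mem_removals hj) ▸ h.2)
  rw [transfer, if_neg hij, Pi.one_apply, mul_one]

end CommRing

section OrderedRing

variable [CommRing R] [LinearOrder R] [IsStrictOrderedRing R] {ω : α → R} {z : α}
  {g : Finset α → R} {S : Finset α} {c : Bool → R}

theorem peel_nonneg (hω : ∀ x, 0 ≤ ω x) (hc : ∀ b, 0 ≤ c b) (hg : ∀ T, 0 ≤ g T) (S : Finset α) :
    0 ≤ peel ω z c g S :=
  Finset.sum_nonneg fun i _ => mul_nonneg (mul_nonneg (removalWeight_nonneg hω i) (hc _)) (hg _)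

theorem peel_pos (hω : ∀ x, 0 < ω x) (hc : ∀ b, 0 < c b) {m : ℕ}
    (hg : ∀ T : Finset α, T.card = m → 0 < g T) (hS : S.card = m + 1) : 0 < peel ω z c g S := by
  refine Finset.sum_pos (fun i hi => ?_) (removals_nonempty z (Finset.card_pos.1 (by omega)))
  have hcard := card_erase_fst_add_one hi
  exact mul_pos (mul_pos (removalWeight_pos hω i) (hc _)) (hg _ (by omega))

theorem atlasMatrix_nonneg_of_ne (hω : ∀ x, 0 ≤ ω x) (hg : ∀ T, 0 ≤ g T) {i j : Removal α}
    (hij : i ≠ j) : 0 ≤ atlasMatrix ω z g S i j := by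
  rw [atlasMatrix, Matrix.add_apply, Matrix.diagonal_apply_ne _ hij, zero_add, Matrix.of_apply]
  split_ifs
  · exact mul_nonneg (mul_nonneg (removalWeight_nonneg hω i) (removalWeight_nonneg hω j)) (hg _)
  · exact le_rfl

/- A removal blocked by both `i` and `j` lies on the same side as each of them, so that the first
factor is a positive multiple of `v j - v i`. -/
theorem mul_transferSum_sub_nonneg (hω : ∀ x, 0 ≤ ω x) (hg : ∀ T, 0 ≤ g T) (hc : ∀ b, 0 ≤ c b)
    {i j : Removal α} (hi : i ∈ removals z S) (hj : j ∈ removals z S) (v : Removal α → R) :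
    0 ≤ (c i.2 * v j - c j.2 * v i) *
      (transferSum ω z g S v i j - transferSum ω z g S v j i) := by
  rw [transferSum_sub_transferSum_swap ω g hi hj, Finset.mul_sum]
  refine Finset.sum_nonneg fun k hk => ?_
  obtain ⟨hik, hjk⟩ := (Finset.mem_filter.1 hk).2
  rw [hik.1.trans hjk.1.symm]
  calc 0 ≤ c j.2 * removalWeight ω k * g (((S.erase i.1).erase j.1).erase k.1) * (v j - v i) ^ 2 :=
        mul_nonneg (mul_nonneg (mul_nonneg (hc _) (removalWeight_nonneg hω k)) (hg _)) (sq_nonneg _)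
    _ = (c j.2 * v j - c j.2 * v i) *
          (removalWeight ω k * (v j - v i) * g (((S.erase i.1).erase j.1).erase k.1)) := by ring

theorem dotProduct_atlasMatrix_peel_mulVec_le [Fintype α] (hω : ∀ x, 0 ≤ ω x) (hg : ∀ T, 0 ≤ g T)
    (hc : ∀ b, 0 ≤ c b) (v : Removal α → R) :
    v ⬝ᵥ atlasMatrix ω z (peel ω z c g) S *ᵥ v ≤
      ∑ i ∈ removals z S, c i.2 * (removalWeight ω i *
        (transfer i v ⬝ᵥ atlasMatrix ω z g (S.erase i.1) *ᵥ transfer i v)) := by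
  rw [dotProduct_atlasMatrix_peel_mulVec, sum_dotProduct_atlasMatrix_transfer,
    sum_sum_removals_erase, sum_sum_removals_erase]
  refine add_le_add (Finset.sum_le_sum fun i _ => Finset.sum_le_sum fun j hj => ?_) ?_
  · have hij := (Finset.mem_filter.1 hj).2
    rw [transfer, if_pos hij, hij.1]
  · refine sum_sum_removals_ne_le fun i hi j hj => ?_
    rw [transfer, transfer, if_neg (not_blocks_of_mem_removals (fst_mem_of_mem_removals hi) hj),
      if_neg (not_blocks_of_mem_removals (fst_mem_of_mem_removals hj) hi), ← sub_nonneg]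
    convert mul_nonneg (mul_nonneg (removalWeight_nonneg hω i) (removalWeight_nonneg hω j))
      (mul_transferSum_sub_nonneg hω hg hc hi hj v) using 1
    ring

end OrderedRing

section BaseCase

variable [CommRing R] [LinearOrder R] [IsStrictOrderedRing R] {ω : α → R} {z : α} {S : Finset α}

theorem atlasMatrix_one_apply_self_nonneg (hω : ∀ x, 0 ≤ ω x) (i : Removal α) :
    0 ≤ atlasMatrix ω z 1 S i i := by
  simp only [atlasMatrix, Matrix.add_apply, Matrix.diagonal_apply_eq, Matrix.of_apply, ne_eq,
    not_true, and_false, if_false, add_zero, Pi.one_apply, mul_one]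
  split_ifs
  · exact mul_nonneg (removalWeight_nonneg hω i)
      (Finset.sum_nonneg fun k _ => removalWeight_nonneg hω k)
  · exact le_rfl

theorem atlasMatrix_one_apply_self_le (hω : ∀ x, 0 ≤ ω x) {x y : α} (hS : S.erase x = {y})
    (b : Bool) : atlasMatrix ω z 1 S (x, b) (x, b) ≤
      removalWeight ω (x, b) * removalWeight ω (y, b) := by
  simp only [atlasMatrix, Matrix.add_apply, Matrix.diagonal_apply_eq, Matrix.of_apply, ne_eq,
    not_true, and_false, if_false, add_zero, Pi.one_apply, mul_one]
  split_ifs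
  · refine mul_le_mul_of_nonneg_left ?_ (removalWeight_nonneg hω _)
    rw [← Finset.sum_singleton (removalWeight ω) (y, b), hS]
    refine Finset.sum_le_sum_of_subset_of_nonneg (fun k hk => ?_)
      fun k _ _ => removalWeight_nonneg hω k
    obtain ⟨hk, hb⟩ := Finset.mem_filter.1 hk
    exact Finset.mem_singleton.2
      (Prod.ext (Finset.mem_singleton.1 (fst_mem_of_mem_removals hk)) hb.1.symm)
  · exact mul_nonneg (removalWeight_nonneg hω _) (removalWeight_nonneg hω _)

variable [Fintype α]

theorem isHyperbolic_atlasMatrix_pair_of_lt (hω : ∀ x, 0 ≤ ω x) (hanti : Antitone ω) {a b : α}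
    (hab : a < b) : IsHyperbolic (atlasMatrix ω z 1 {a, b}) := by
  have hne : a ≠ b := hab.ne
  have hmem (k : Removal α) (hk : k ∈ removals z {a, b}) : k = (a, true) ∨ k = (b, false) := by
    obtain ⟨x, s⟩ := k
    cases s <;> simp only [mem_removals, SideLT, Finset.mem_insert, Finset.mem_singleton] at hk <;>
      grind [lt_irrefl]
  refine isHyperbolic_of_forall_ne_eq_zero (isSymm_atlasMatrix ω z 1 _) (i := (a, true))
    (j := (b, false)) (by simp) (fun k l hka hkb => atlasMatrix_apply_of_notMem ω 1
      (fun hk => (hmem k hk).elim hka hkb) l) ?_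
  by_cases ha : (a, true) ∈ removals z {a, b}
  · by_cases hb : (b, false) ∈ removals z {a, b}
    · have haa := atlasMatrix_one_apply_self_le (z := z) (S := {a, b}) hω (x := a) (y := b)
        (by simp [hne]) true
      have hbb := atlasMatrix_one_apply_self_le (z := z) (S := {a, b}) hω (x := b) (y := a)
        (by grind) false
      rw [atlasMatrix_apply_of_ne ω 1 ha hb hne]
      simp only [removalWeight, if_true, Bool.false_eq_true, if_false, Pi.one_apply, mul_one]
        at haa hbb ⊢
      calc _ ≤ ω a * ω b * 1 := mul_le_mul haa hbb (atlasMatrix_one_apply_self_nonneg hω _)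
            (mul_nonneg (hω a) (hω b))
        _ ≤ ω a ^ 2 := by
          rw [mul_one, sq]
          exact mul_le_mul_of_nonneg_left (hanti hab.le) (hω a)
    · rw [atlasMatrix_apply_of_notMem ω 1 hb, mul_zero]
      exact sq_nonneg _
  · rw [atlasMatrix_apply_of_notMem ω 1 ha, zero_mul]
    exact sq_nonneg _

theorem isHyperbolic_atlasMatrix_pair_of_not_lt {a b : α} (hne : a ≠ b) (hab : ¬ a < b)
    (hba : ¬ b < a) : IsHyperbolic (atlasMatrix ω z 1 {a, b}) := by
  have hdisj : Disjoint (removals z {a}) (removals z {b}) :=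
    Finset.disjoint_left.2 fun i hia hib =>
      hne ((Finset.mem_singleton.1 (fst_mem_of_mem_removals hia)).symm.trans
        (Finset.mem_singleton.1 (fst_mem_of_mem_removals hib)))
  let f (x : α) (v : Removal α → R) : R := ∑ i ∈ removals z {x}, removalWeight ω i * v i
  have hsum {x y : α} (hsub : removals z {x} ⊆ removals z {a, b}) (hxy : ¬ x < y) (hyx : ¬ y < x)
      (hS : ({a, b} : Finset α).erase x = {y}) (u v : Removal α → R) :
      ∑ i ∈ removals z {x}, u i * (atlasMatrix ω z 1 {a, b} *ᵥ v) i = f x u * f y v := by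
    rw [Finset.sum_mul]
    refine Finset.sum_congr rfl fun i hi => ?_
    have hix := Finset.mem_singleton.1 (fst_mem_of_mem_removals hi)
    have hiy : ¬ SideLT i.2 i.1 y := by
      rw [hix]
      cases i.2
      exacts [hyx, hxy]
    rw [atlasMatrix_one_mulVec_of_not_sideLT ω (hsub hi) (hix ▸ hS) hiy, mul_left_comm, mul_assoc,
      mul_left_comm]
  refine isHyperbolic_of_binary_form (f a) (f b) (p := 0) (q := 1) (r := 0) (by simp) fun u v => ?_
  have hunion := removals_pair_of_not_lt (z := z) hab hba
  rw [dotProduct, ← Finset.sum_subset (Finset.subset_univ (removals z {a, b})) fun i _ hi => by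
    rw [atlasMatrix_mulVec_of_notMem ω 1 hi, mul_zero]]
  nth_rw 1 [hunion]
  rw [Finset.sum_union hdisj,
    hsum (hunion ▸ Finset.subset_union_left) hab hba (by simp [hne]),
    hsum (hunion ▸ Finset.subset_union_right) hba hab (by grind)]
  ring

theorem isHyperbolic_atlasMatrix_one (hω : ∀ x, 0 ≤ ω x) (hanti : Antitone ω)
    (hS : S.card = 2) : IsHyperbolic (atlasMatrix ω z 1 S) := by
  obtain ⟨a, b, hne, rfl⟩ := Finset.card_eq_two.1 hS
  by_cases hab : a < b
  · exact isHyperbolic_atlasMatrix_pair_of_lt hω hanti hab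
  by_cases hba : b < a
  · rw [Finset.pair_comm]
    exact isHyperbolic_atlasMatrix_pair_of_lt hω hanti hba
  exact isHyperbolic_atlasMatrix_pair_of_not_lt hne hab hba

end BaseCase

section Hyperbolicity

variable [Fintype α]

section Field

variable {𝕜 : Type*} [Field 𝕜] [LinearOrder 𝕜] [IsStrictOrderedRing 𝕜] {ω : α → 𝕜} {z : α}

theorem mul_dotProduct_transfer_le {c : Bool → 𝕜} {g : Finset α → 𝕜} {S : Finset α}
    {i : Removal α} (hi : i ∈ removals z S) (hc : 0 < c i.2)
    (hyp : IsHyperbolic (atlasMatrix ω z g (S.erase i.1))) (hw : 0 < removalWeight ω i)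
    (hrow : 0 < (atlasMatrix ω z (peel ω z c g) S *ᵥ (c ∘ Prod.snd)) i) (v : Removal α → 𝕜) :
    c i.2 * (removalWeight ω i *
        (transfer i v ⬝ᵥ atlasMatrix ω z g (S.erase i.1) *ᵥ transfer i v)) ≤
      c i.2 * (atlasMatrix ω z (peel ω z c g) S *ᵥ v) i ^ 2 /
        (atlasMatrix ω z (peel ω z c g) S *ᵥ (c ∘ Prod.snd)) i := by
  rw [atlasMatrix_peel_mulVec ω g hi, transfer_comp_snd] at hrow
  have hpos := (mul_pos_iff_of_pos_left hw).1 hrow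
  rw [atlasMatrix_peel_mulVec ω g hi, atlasMatrix_peel_mulVec ω g hi, transfer_comp_snd,
    mul_div_assoc]
  refine mul_le_mul_of_nonneg_left ?_ hc.le
  rw [mul_pow, sq (removalWeight ω i), mul_assoc, mul_div_mul_left _ _ hw.ne', mul_div_assoc]
  exact mul_le_mul_of_nonneg_left ((le_div_iff₀ hpos).2 (hyp _ _ hpos.le)) hw.le

theorem isHyperbolic_atlasMatrix_peel (hω : ∀ x, 0 < ω x) {c : Bool → 𝕜} (hc : ∀ b, 0 < c b)
    {g : Finset α → 𝕜} (hg : ∀ T, 0 ≤ g T) {m : ℕ} (hgm : ∀ T : Finset α, T.card = m → 0 < g T)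
    {S : Finset α} (hS : S.card = m + 3)
    (hyp : ∀ i ∈ removals z S, IsHyperbolic (atlasMatrix ω z g (S.erase i.1))) :
    IsHyperbolic (atlasMatrix ω z (peel ω z c g) S) := by
  have hω' (x : α) : 0 ≤ ω x := (hω x).le
  have hc' (b : Bool) : 0 ≤ c b := (hc b).le
  have hpeel (T : Finset α) (hT : T.card = m + 1) : 0 < peel ω z c g T := peel_pos hω hc hgm hT
  have hrow (i : Removal α) (hi : i ∈ removals z S) :
      0 < (atlasMatrix ω z (peel ω z c g) S *ᵥ (c ∘ Prod.snd)) i := by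
    rw [atlasMatrix_mulVec_comp_snd _ _ hi]
    exact mul_pos (removalWeight_pos hω i)
      (peel_pos hω hc hpeel (by have := card_erase_fst_add_one hi; omega))
  refine isHyperbolic_of_pullback (h := c ∘ Prod.snd) (isSymm_atlasMatrix ω z _ S)
    (fun i j hij => atlasMatrix_nonneg_of_ne hω' (peel_nonneg hω' hc' hg) hij)
    (fun i => hc i.2) (fun p hp i j hi hj => ?_) fun v => ?_
  · refine eq_of_forall_mem_removals_ne (S := S) (z := z) (by omega) (fun i hi j hj hij => ?_)
      (not_imp_comm.1 (atlasMatrix_mulVec_of_notMem ω _ · _) hi)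
      (not_imp_comm.1 (atlasMatrix_mulVec_of_notMem ω _ · _) hj)
    have hcard : ((S.erase i.1).erase j.1).card = m + 1 := by
      have := card_erase_fst_add_one hi
      have := card_erase_fst_add_one (mem_removals_erase_of_ne hj hij.symm)
      omega
    refine hp i j (ne_of_gt ?_)
    rw [atlasMatrix_apply_of_ne ω _ hi hj hij]
    exact mul_pos (mul_pos (removalWeight_pos hω i) (removalWeight_pos hω j)) (hpeel _ hcard)
  · refine (dotProduct_atlasMatrix_peel_mulVec_le hω' hg hc' v).trans ?_
    rw [← Finset.sum_subset (Finset.subset_univ (removals z S)) fun i _ hi => by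
      rw [atlasMatrix_mulVec_of_notMem ω _ hi, atlasMatrix_mulVec_of_notMem ω _ hi, div_zero]]
    exact Finset.sum_le_sum fun i hi =>
      mul_dotProduct_transfer_le hi (hc i.2) (hyp i hi) (removalWeight_pos hω i) (hrow i hi) v

end Field

end Hyperbolicity

section Peels

/-- The iterated sum over all ways of exhausting `S` one element at a time, the `n`-th removal being
charged by the `n`-th entry of the list. -/
def peels {R : Type*} [CommSemiring R] (ω : α → R) (z : α) : List (Bool → R) → Finset α → R
  | [] => 1
  | c :: C => peel ω z c (peels ω z C)

section OrderedRing

variable [CommRing R] [LinearOrder R] [IsStrictOrderedRing R] {ω : α → R} {z : α}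
  {C : List (Bool → R)}

theorem peels_nonneg (hω : ∀ x, 0 ≤ ω x) (hC : ∀ c ∈ C, ∀ b, 0 ≤ c b) (S : Finset α) :
    0 ≤ peels ω z C S := by
  induction C generalizing S with
  | nil => exact zero_le_one
  | cons c C ih =>
    rw [List.forall_mem_cons] at hC
    exact peel_nonneg hω hC.1 (ih hC.2) S

theorem peels_pos (hω : ∀ x, 0 < ω x) (hC : ∀ c ∈ C, ∀ b, 0 < c b) {S : Finset α}
    (hS : S.card = C.length) : 0 < peels ω z C S := by
  induction C generalizing S with
  | nil => exact one_pos
  | cons c C ih =>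
    rw [List.forall_mem_cons] at hC
    exact peel_pos hω hC.1 (fun T hT => ih hC.2 hT) hS

end OrderedRing

theorem isHyperbolic_atlasMatrix_peels [Fintype α] {𝕜 : Type*} [Field 𝕜] [LinearOrder 𝕜]
    [IsStrictOrderedRing 𝕜] {ω : α → 𝕜} (hω : ∀ x, 0 < ω x) (hanti : Antitone ω) {z : α}
    {C : List (Bool → 𝕜)} (hC : ∀ c ∈ C, ∀ b, 0 < c b) {S : Finset α}
    (hS : S.card = C.length + 2) : IsHyperbolic (atlasMatrix ω z (peels ω z C) S) := by
  induction C generalizing S with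
  | nil => exact isHyperbolic_atlasMatrix_one (fun x => (hω x).le) hanti hS
  | cons c C ih =>
    rw [List.forall_mem_cons] at hC
    refine isHyperbolic_atlasMatrix_peel hω hC.1
      (peels_nonneg (fun x => (hω x).le) fun c hc b => (hC.2 c hc b).le)
      (fun T hT => peels_pos hω hC.2 hT) hS fun i hi => ih hC.2 ?_
    have := card_erase_fst_add_one hi
    rw [List.length_cons] at hS
    omega

theorem peels_mul_peels_le_sq_of_pos [Finite α] {𝕜 : Type*} [Field 𝕜] [LinearOrder 𝕜]
    [IsStrictOrderedRing 𝕜] {ω : α → 𝕜} (hω : ∀ x, 0 < ω x) (hanti : Antitone ω) {z : α}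
    {C : List (Bool → 𝕜)} (hC : ∀ c ∈ C, ∀ b, 0 < c b) {S : Finset α}
    (hS : S.card = C.length + 2) (c : Bool → 𝕜) {d : Bool → 𝕜} (hd : ∀ b, 0 ≤ d b) :
    peels ω z (c :: c :: C) S * peels ω z (d :: d :: C) S ≤ peels ω z (c :: d :: C) S ^ 2 := by
  obtain ⟨_⟩ := nonempty_fintype α
  have hω' (x : α) : 0 ≤ ω x := (hω x).le
  have h := isHyperbolic_atlasMatrix_peels hω hanti (z := z) hC hS (c ∘ Prod.snd) (d ∘ Prod.snd)
  simp only [dotProduct_atlasMatrix_mulVec_comp_snd] at h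
  exact h (peel_nonneg hω' hd (peel_nonneg hω' hd
    (peels_nonneg hω' fun c hc b => (hC c hc b).le)) S)

theorem continuous_peels_map_add (ω : α → ℝ) (z : α) (C : List (Bool → ℝ)) (S : Finset α) :
    Continuous fun ε => peels ω z (C.map fun c b => c b + ε) S := by
  induction C generalizing S with
  | nil => exact continuous_const
  | cons c C ih =>
    exact continuous_finsetSum _ fun i _ =>
      (continuous_const.mul (continuous_const.add continuous_id)).mul (ih _)

theorem peels_mul_peels_le_sq [Finite α] {ω : α → ℝ} (hω : ∀ x, 0 < ω x) (hanti : Antitone ω)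
    {z : α} {C : List (Bool → ℝ)} (hC : ∀ c ∈ C, ∀ b, 0 ≤ c b) {S : Finset α}
    (hS : S.card = C.length + 2) (c : Bool → ℝ) {d : Bool → ℝ} (hd : ∀ b, 0 ≤ d b) :
    peels ω z (c :: c :: C) S * peels ω z (d :: d :: C) S ≤ peels ω z (c :: d :: C) S ^ 2 := by
  let p (D : List (Bool → ℝ)) (ε : ℝ) : ℝ := peels ω z (D.map fun c b => c b + ε) S
  have hp (D : List (Bool → ℝ)) : Continuous (p D) := continuous_peels_map_add ω z D S
  have hpert (ε : ℝ) (hε : ε ∈ Set.Ioi 0) :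
      p (c :: c :: C) ε * p (d :: d :: C) ε ≤ p (c :: d :: C) ε ^ 2 :=
    peels_mul_peels_le_sq_of_pos hω hanti
      (List.forall_mem_map.2 fun c hc b => add_pos_of_nonneg_of_pos (hC c hc b) hε)
      (by rwa [List.length_map]) _ fun b => add_nonneg (hd b) (le_of_lt hε)
  have hlim : p (c :: c :: C) 0 * p (d :: d :: C) 0 ≤ p (c :: d :: C) 0 ^ 2 :=
    ContinuousWithinAt.closure_le (s := Set.Ioi 0) (by simp)
      ((hp _).mul (hp _)).continuousWithinAt ((hp _).pow 2).continuousWithinAt hpert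
  simpa [p] using hlim

end Peels

end Atlas

section Extensions

/-- The inverse of a removal: put the element of `i` back at its end of the list `l`. -/
def attach {α : Type*} : Removal α → List α → List α
  | (x, true), l => x :: l
  | (x, false), l => l ++ [x]

theorem insertIdx_append_of_le_length {α : Type*} (l l' : List α) (z : α) {k : ℕ}
    (hk : k ≤ l.length) : (l ++ l').insertIdx k z = l.insertIdx k z ++ l' := by
  induction l generalizing k with
  | nil => simp_all
  | cons x l ih => cases k <;> simp_all

theorem insertIdx_attach {α : Type*} (i : Removal α) (z : α) {l : List α} {k : ℕ}
    (hk : k ≤ l.length) :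
    (attach i l).insertIdx (k + i.2.toNat) z = attach i (l.insertIdx k z) := by
  obtain ⟨x, _ | _⟩ := i
  · exact insertIdx_append_of_le_length l [x] z hk
  · rfl

theorem coe_attach {α : Type*} (i : Removal α) (l : List α) :
    (attach i l : Multiset α) = i.1 ::ₘ l := by
  obtain ⟨x, _ | _⟩ := i
  · exact Multiset.coe_eq_coe.2 (List.perm_append_singleton x l)
  · rfl

theorem val_eq_coe_attach {α : Type*} [DecidableEq α] {S : Finset α} {i : Removal α}
    {l : List α} : S.val = attach i l ↔ i.1 ∈ S ∧ (S.erase i.1).val = l := by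
  rw [coe_attach, Finset.erase_val, ← Finset.mem_val]
  constructor
  · intro h
    rw [h]
    exact ⟨Multiset.mem_cons_self _ _, Multiset.erase_cons_head _ _⟩
  · rintro ⟨hi, h⟩
    rw [← h, Multiset.cons_erase hi]

theorem pairwise_attach {α : Type*} [LT α] (i : Removal α) (l : List α) :
    (attach i l).Pairwise (fun x y => ¬ y < x) ↔
      (∀ y ∈ l, ¬ SideLT i.2 y i.1) ∧ l.Pairwise fun x y => ¬ y < x := by
  obtain ⟨x, _ | _⟩ := i
  · simp [attach, SideLT, List.pairwise_append, and_comm]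
  · exact List.pairwise_cons

theorem prod_map_take_attach {α R : Type*} [CommSemiring R] (ω : α → R) (i : Removal α)
    {l : List α} {k : ℕ} (hk : k ≤ l.length) :
    (((attach i l).take (k + i.2.toNat)).map ω).prod =
      removalWeight ω i * ((l.take k).map ω).prod := by
  obtain ⟨x, _ | _⟩ := i
  · simp [attach, removalWeight, List.take_append_of_le_length hk]
  · simp [attach, removalWeight]

theorem exists_attach_eq {α : Type*} (b : Bool) {l : List α} (hl : l ≠ []) :
    ∃ x l', attach (x, b) l' = l := by
  cases b
  · exact ⟨l.getLast hl, l.dropLast, List.dropLast_append_getLast hl⟩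
  · exact ⟨l.head hl, l.tail, List.cons_head_tail hl⟩

theorem attach_inj {α : Type*} {b : Bool} {x y : α} {l l' : List α} :
    attach (x, b) l = attach (y, b) l' ↔ x = y ∧ l = l' := by
  cases b <;> simp [attach, and_comm]

variable {α R : Type*} [Preorder α] [DecidableEq α] {z : α} {S : Finset α} {k : ℕ}

/-- The linear extensions of `insert z S` with exactly `k` elements below `z`, encoded as lists of
the elements of `S` in increasing order, with `z` left out. -/
def extensionLists (z : α) (S : Finset α) (k : ℕ) : Finset (List α) :=
  {l ∈ S.val.lists.toFinset | (l.insertIdx k z).Pairwise fun x y => ¬ y < x}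

theorem mem_extensionLists {l : List α} : l ∈ extensionLists z S k ↔
    S.val = l ∧ (l.insertIdx k z).Pairwise fun x y => ¬ y < x := by
  rw [extensionLists, Finset.mem_filter, Multiset.mem_toFinset, Multiset.mem_lists_iff]
  rfl

theorem length_of_mem_extensionLists {l : List α} (hl : l ∈ extensionLists z S k) :
    l.length = S.card := by
  rw [Finset.card_def, (mem_extensionLists.1 hl).1, Multiset.coe_card]

theorem attach_mem_extensionLists {i : Removal α} {l : List α} (hk : k < S.card) :
    attach i l ∈ extensionLists z S (k + i.2.toNat) ↔
      i ∈ removals z S ∧ l ∈ extensionLists z (S.erase i.1) k := by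
  rw [mem_extensionLists, mem_extensionLists, mem_removals, val_eq_coe_attach]
  by_cases hi : i.1 ∈ S
  swap
  · simp [hi]
  by_cases hl : (S.erase i.1).val = l
  swap
  · simp only [hl, false_and, and_false]
  have hlen : k ≤ l.length := by
    have := Finset.card_erase_add_one hi
    rw [Finset.card_def, hl, Multiset.coe_card] at this
    omega
  have hmem (y : α) : y ∈ l.insertIdx k z ↔ y = z ∨ y ∈ S.erase i.1 := by
    rw [List.mem_insertIdx hlen, ← Finset.mem_val, hl, Multiset.mem_coe]
  have hext : (∀ y ∈ l.insertIdx k z, ¬ SideLT i.2 y i.1) ↔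
      ¬ SideLT i.2 z i.1 ∧ ∀ y ∈ S, ¬ SideLT i.2 y i.1 := by
    simp only [hmem, Finset.mem_erase]
    grind [not_sideLT_self]
  rw [insertIdx_attach i z hlen, pairwise_attach, hext]
  tauto

/-- The weighted count of linear extensions encoded by `extensionLists`. -/
def extensionSum [CommSemiring R] (ω : α → R) (z : α) (S : Finset α) (k : ℕ) : R :=
  ∑ l ∈ extensionLists z S k, ((l.take k).map ω).prod

variable [CommSemiring R] (ω : α → R)

theorem peel_single (b : Bool) (g : Finset α → R) :
    peel ω z (Pi.single b 1) g S =
      ∑ i ∈ removals z S with i.2 = b, removalWeight ω i * g (S.erase i.1) := by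
  rw [peel, Finset.sum_filter]
  refine Finset.sum_congr rfl fun i _ => ?_
  split_ifs with h
  · rw [h, Pi.single_eq_same, mul_one]
  · rw [Pi.single_eq_of_ne h, mul_zero, zero_mul]

theorem peel_single_extensionSum (b : Bool) (hk : k < S.card) :
    peel ω z (Pi.single b 1) (extensionSum ω z · k) S = extensionSum ω z S (k + b.toNat) := by
  simp only [peel_single, extensionSum, Finset.mul_sum]
  rw [Finset.sum_sigma']
  refine Finset.sum_bij (fun p _ => attach p.1 p.2) (fun p hp => ?_) (fun p hp q hq hpq => ?_)
    (fun l hl => ?_) fun p hp => ?_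
  · obtain ⟨hp, hl⟩ := Finset.mem_sigma.1 hp
    obtain ⟨hi, rfl⟩ := Finset.mem_filter.1 hp
    exact (attach_mem_extensionLists hk).2 ⟨hi, hl⟩
  · obtain ⟨⟨x, b₁⟩, l⟩ := p
    obtain ⟨⟨y, b₂⟩, l'⟩ := q
    obtain rfl : b₁ = b := (Finset.mem_filter.1 (Finset.mem_sigma.1 hp).1).2
    obtain rfl : b₂ = b₁ := (Finset.mem_filter.1 (Finset.mem_sigma.1 hq).1).2
    obtain ⟨rfl, rfl⟩ := attach_inj.1 hpq
    rfl
  · have hlen := length_of_mem_extensionLists hl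
    obtain ⟨x, l', rfl⟩ := exists_attach_eq b (List.ne_nil_of_length_pos (by omega : 0 < l.length))
    obtain ⟨hx, hl'⟩ := (attach_mem_extensionLists (i := (x, b)) hk).1 hl
    exact ⟨⟨(x, b), l'⟩, Finset.mem_sigma.2 ⟨Finset.mem_filter.2 ⟨hx, rfl⟩, hl'⟩, rfl⟩
  · obtain ⟨hp, hl⟩ := Finset.mem_sigma.1 hp
    obtain ⟨hi, rfl⟩ := Finset.mem_filter.1 hp
    refine (prod_map_take_attach ω p.1 ?_).symm
    have hlen := length_of_mem_extensionLists hl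
    have hcard := card_erase_fst_add_one hi
    omega

theorem extensionSum_empty (z : α) : extensionSum ω z ∅ 0 = 1 := by
  have hlists : extensionLists z ∅ 0 = {[]} := by
    ext l
    simp +contextual [mem_extensionLists, eq_comm]
  rw [extensionSum, hlists, Finset.sum_singleton, List.take_nil, List.map_nil, List.prod_nil]

theorem peels_map_single (bs : List Bool) (hS : S.card = bs.length) :
    peels ω z (bs.map (Pi.single · 1)) S = extensionSum ω z S (bs.count true) := by
  induction bs generalizing S with
  | nil =>
    rw [List.length_nil, Finset.card_eq_zero] at hS
    rw [hS]
    exact (extensionSum_empty ω z).symm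
  | cons b bs ih =>
    rw [List.length_cons] at hS
    have hcount : (b :: bs).count true = bs.count true + b.toNat := by cases b <;> simp
    rw [hcount, ← peel_single_extensionSum ω b (hS ▸ Nat.lt_succ_of_le List.count_le_length)]
    refine Finset.sum_congr rfl fun i hi => congrArg _ (ih ?_)
    have := card_erase_fst_add_one hi
    omega

end Extensions

section Counting

variable {α : Type*}

theorem coe_ofFn_symm [Fintype α] {n : ℕ} (σ : α ≃ Fin n) :
    (List.ofFn σ.symm : Multiset α) = Finset.univ.val := by
  rw [← Fin.univ_val_map, ← Finset.map_univ_equiv σ.symm]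
  rfl

theorem exists_ofFn_symm_eq [Fintype α] {l : List α} (hl : (l : Multiset α) = Finset.univ.val) :
    ∃ σ : α ≃ Fin (Fintype.card α), List.ofFn σ.symm = l := by
  classical
  have hnodup : l.Nodup := Multiset.coe_nodup.1 (hl ▸ Finset.univ.nodup)
  have hmem (x : α) : x ∈ l := Multiset.mem_coe.1 (hl ▸ Finset.mem_univ_val x)
  have hlen : l.length = Fintype.card α := by
    rw [← Multiset.coe_card, hl]
    rfl
  refine ⟨(hnodup.getEquivOfForallMemList l hmem).symm.trans (finCongr hlen), ?_⟩
  exact List.ext_getElem (by simp [hlen]) fun i h₁ h₂ => by simp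

theorem prod_map_take_ofFn_symm [Fintype α] {n : ℕ} {R : Type*} [CommMonoid R] (ω : α → R)
    (σ : α ≃ Fin n) (k : ℕ) :
    (((List.ofFn σ.symm).take k).map ω).prod = ∏ x with (σ x : ℕ) < k, ω x := by
  rw [List.map_take, List.map_ofFn, List.prod_take_ofFn]
  exact Finset.prod_equiv σ.symm (by simp) fun _ _ => rfl

theorem val_univ_erase_eq_coe [Fintype α] [DecidableEq α] {l : List α} {z : α} {k : ℕ}
    (hk : k ≤ l.length) :
    (Finset.univ.erase z).val = l ↔ (l.insertIdx k z : Multiset α) = Finset.univ.val := by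
  rw [Multiset.coe_eq_coe.2 (List.perm_insertIdx z l hk), ← Multiset.cons_coe, Finset.erase_val,
    eq_comm, ← Multiset.cons_inj_right z, Multiset.cons_erase (Finset.mem_univ_val z)]

theorem isLinExt_iff_pairwise_ofFn [Fintype α] [PartialOrder α] {σ : α ≃ Fin (Fintype.card α)} :
    IsLinExt σ ↔ (List.ofFn σ.symm).Pairwise fun x y => ¬ y < x := by
  rw [List.pairwise_ofFn]
  constructor
  · intro hσ i j hij hlt
    have hji := hσ _ _ hlt
    rw [σ.apply_symm_apply, σ.apply_symm_apply] at hji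
    exact hij.not_gt hji
  · intro hσ x y hxy
    by_contra! hle
    obtain heq | hlt := hle.eq_or_lt
    · exact hxy.ne (σ.injective heq).symm
    · exact hσ hlt (by rwa [σ.symm_apply_apply, σ.symm_apply_apply])

theorem insertIdx_eraseIdx_ofFn_symm {n m : ℕ} {σ : α ≃ Fin n} {z : α} (hσ : (σ z : ℕ) = m) :
    ((List.ofFn σ.symm).eraseIdx m).insertIdx m z = List.ofFn σ.symm := by
  have hm : m < (List.ofFn σ.symm).length := by
    rw [List.length_ofFn, ← hσ]
    exact (σ z).isLt
  convert List.insertIdx_eraseIdx_getElem hm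
  subst hσ
  simp

theorem apply_eq_of_ofFn_symm_eq_insertIdx {n m : ℕ} {σ : α ≃ Fin n} {z : α} {l : List α}
    (hm : m ≤ l.length) (hσ : List.ofFn σ.symm = l.insertIdx m z) : (σ z : ℕ) = m := by
  have hmn : m < n := by
    rw [← List.length_ofFn (f := σ.symm), hσ, List.length_insertIdx_of_le_length hm]
    omega
  have hget : σ.symm ⟨m, hmn⟩ = z := by
    rw [← List.getElem_ofFn (f := σ.symm) (by simpa using hmn)]
    simp only [hσ, List.getElem_insertIdx_self]
  rw [← hget, σ.apply_symm_apply]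

theorem Nw_eq_extensionSum (ω : X → ℝ) (z : X) {k : ℕ} (hk : k - 1 < Fintype.card X) :
    Nw ω z k = extensionSum ω z (Finset.univ.erase z) (k - 1) := by
  have hcard : (Finset.univ.erase z).card + 1 = Fintype.card X :=
    Finset.card_erase_add_one (Finset.mem_univ z)
  refine Finset.sum_bij (fun σ _ => (List.ofFn σ.symm).eraseIdx (k - 1)) (fun σ hσ => ?_)
    (fun σ hσ τ hτ hστ => ?_) (fun l hl => ?_) fun σ hσ => ?_
  · obtain ⟨hlin, hz⟩ := (Finset.mem_filter.1 hσ).2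
    refine mem_extensionLists.2 ⟨(val_univ_erase_eq_coe (k := k - 1) ?_).2 ?_, ?_⟩
    · rw [List.length_eraseIdx_of_lt (by simpa using hk), List.length_ofFn]
      omega
    · rw [insertIdx_eraseIdx_ofFn_symm hz, coe_ofFn_symm]
    · rw [insertIdx_eraseIdx_ofFn_symm hz]
      exact isLinExt_iff_pairwise_ofFn.1 hlin
  · have hins := congrArg (fun l => l.insertIdx (k - 1) z) hστ
    simp only [insertIdx_eraseIdx_ofFn_symm (Finset.mem_filter.1 hσ).2.2,
      insertIdx_eraseIdx_ofFn_symm (Finset.mem_filter.1 hτ).2.2] at hins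
    exact Equiv.symm_bijective.injective (DFunLike.coe_injective (List.ofFn_injective hins))
  · have hlen : k - 1 ≤ l.length := by
      rw [length_of_mem_extensionLists hl]
      omega
    obtain ⟨hval, hpair⟩ := mem_extensionLists.1 hl
    obtain ⟨σ, hσ⟩ := exists_ofFn_symm_eq ((val_univ_erase_eq_coe hlen).1 hval)
    refine ⟨σ, Finset.mem_filter.2 ⟨Finset.mem_univ σ, isLinExt_iff_pairwise_ofFn.2 (hσ ▸ hpair),
      apply_eq_of_ofFn_symm_eq_insertIdx hlen hσ⟩, ?_⟩
    rw [hσ, List.eraseIdx_insertIdx_self]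
  · have hz := (Finset.mem_filter.1 hσ).2.2
    rw [List.take_eraseIdx_eq_take_of_le _ _ _ le_rfl, prod_map_take_ofFn_symm]
    simp only [Fin.lt_def, hz]

end Counting

end WeightedStanley

/-- **Weighted Stanley inequality.**  For a positive order-reversing weight function `ω`
and any `z ∈ X`, the numbers `N_ω(k)` are log-concave: `N_ω(k)² ≥ N_ω(k-1)·N_ω(k+1)` for
all `1 < k < n`. -/
theorem weighted_stanley_inequality
    (ω : X → ℝ) (hω : ∀ x, 0 < ω x)
    (hrev : ∀ x y : X, x ≤ y → ω y ≤ ω x)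
    (z : X) (k : ℕ) (hk1 : 1 < k) (hk2 : k < Fintype.card X) :
    Nw ω z (k - 1) * Nw ω z (k + 1) ≤ (Nw ω z k) ^ 2 := by
  let bs := List.replicate (k - 2) true ++ List.replicate (Fintype.card X - k - 1) false
  have hcount : bs.count true = k - 2 := by simp [bs, List.count_replicate]
  have hcard : (Finset.univ.erase z).card = bs.length + 2 := by
    have := Finset.card_erase_add_one (Finset.mem_univ z)
    rw [Finset.card_univ] at this
    simp only [bs, List.length_append, List.length_replicate]
    omega
  have hNw (b b' : Bool) (j : ℕ) (hj : (b :: b' :: bs).count true = j - 1)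
      (hjX : j - 1 < Fintype.card X) : Nw ω z j =
        WeightedStanley.peels ω z ((b :: b' :: bs).map (Pi.single · 1)) (Finset.univ.erase z) := by
    rw [WeightedStanley.peels_map_single ω _ (by simpa using hcard), hj,
      WeightedStanley.Nw_eq_extensionSum ω z hjX]
  have hsingle (b b' : Bool) : (0 : ℝ) ≤ (Pi.single b 1 : Bool → ℝ) b' :=
    (Pi.single_nonneg.2 zero_le_one : (0 : Bool → ℝ) ≤ Pi.single b 1) b'
  rw [mul_comm, hNw true true (k + 1) (by grind) (by omega),
    hNw true false k (by grind) (by omega),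
    hNw false false (k - 1) (by grind) (by omega)]
  exact WeightedStanley.peels_mul_peels_le_sq hω hrev
    (List.forall_mem_map.2 fun b _ => hsingle b) (by simpa using hcard) _ (hsingle false)
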